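/- Let ρ be a density matrix with entropy E and spectral constants α and β as in the context, and assume α > 0. Then there exist constants δ < 1, C > 0 and n₀ ∈ ℕ such that for all n ≥ n₀, every density matrix σ on the index type (Fin n → ι) satisfying D(σ, ρ^{⊗n}) ≤ 2(1−δ) has rank σ > C · 2^{nE + α√n}. -/

import Mathlib

open scoped BigOperators Classical ComplexOrder

/-- A density matrix: positive semidefinite with trace one. -/
def IsDensity {ι : Type*} [Fintype ι] [DecidableEq ι] (ρ : Matrix ι ι ℂ) : Prop :=
  ρ.PosSemidef ∧ ρ.trace = 1

/-- The trace distance `D(ρ,σ) = Tr|ρ−σ|`: the sum of the absolute values of the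
eigenvalues of the Hermitian matrix `ρ − σ` (no factor 1/2). -/
noncomputable def traceDist {ι : Type*} [Fintype ι] [DecidableEq ι]
    (ρ σ : Matrix ι ι ℂ) : ℝ :=
  if h : (ρ - σ).IsHermitian then ∑ i, |h.eigenvalues i| else 0

/-- The minimal dimension `𝒮(ρ,δ)` of a `δ`-significant subspace: the minimum rank of an
orthogonal projection `P` (`P = Pᴴ = P²`) with `Tr(Pρ) ≥ δ`. -/
noncomputable def sigDim {ι : Type*} [Fintype ι] [DecidableEq ι]
    (ρ : Matrix ι ι ℂ) (δ : ℝ) : ℕ :=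
  sInf {m : ℕ | ∃ P : Matrix ι ι ℂ,
    P.IsHermitian ∧ P * P = P ∧ δ ≤ ((P * ρ).trace).re ∧ P.rank = m}

/-- The `n`-fold Kronecker power of `ρ`, indexed by `Fin n → ι`. -/
noncomputable def kronPow {ι : Type*} (ρ : Matrix ι ι ℂ) (n : ℕ) :
    Matrix (Fin n → ι) (Fin n → ι) ℂ :=
  Matrix.of fun i j => ∏ k, ρ (i k) (j k)

/-- The rank-one matrix `|u⟩⟨u|`. -/
noncomputable def outer {ι : Type*} (u : ι → ℂ) : Matrix ι ι ℂ :=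
  Matrix.of fun i j => u i * starRingEnd ℂ (u j)

/-- The partial trace over the second subsystem. -/
noncomputable def ptraceB {A B : Type*} [Fintype B]
    (M : Matrix (A × B) (A × B) ℂ) : Matrix A A ℂ :=
  Matrix.of fun a a' => ∑ b, M (a, b) (a', b)

open MeasureTheory ProbabilityTheory Filter Matrix

/-- The expectations of an effect `P` against the matrices diagonal in the basis `U` are averages
with weights in `[0, 1]` summing to the trace of `P`. -/
lemma exists_weights_of_effect {κ : Type*} [Fintype κ] [DecidableEq κ] {P U : Matrix κ κ ℂ}
    (hP : P.PosSemidef) (hP' : (1 - P).PosSemidef) (hU : Uᴴ * U = 1) :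
    ∃ w : κ → ℝ, (∀ i, 0 ≤ w i) ∧ (∀ i, w i ≤ 1) ∧ ∑ i, w i = P.trace.re ∧
      ∀ d : κ → ℝ, (P * (U * diagonal (fun i => (d i : ℂ)) * Uᴴ)).trace.re = ∑ i, w i * d i := by
  have hU' : U * Uᴴ = 1 := mul_eq_one_comm.mp hU
  refine ⟨fun i => ((Uᴴ * P * U) i i).re, fun i => ?_, fun i => ?_, ?_, fun d => ?_⟩
  · exact (Complex.le_def.mp ((hP.conjTranspose_mul_mul_same U).diag_nonneg (i := i))).1
  · have h := (Complex.le_def.mp ((hP'.conjTranspose_mul_mul_same U).diag_nonneg (i := i))).1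
    rw [mul_sub, sub_mul, mul_one, hU] at h
    simpa using h
  · rw [← Complex.re_sum]
    change (Uᴴ * P * U).trace.re = _
    rw [trace_mul_comm, ← mul_assoc, hU', one_mul]
  · rw [← mul_assoc, trace_mul_comm, ← mul_assoc, ← mul_assoc, trace, Complex.re_sum]
    simp [mul_diagonal]

lemma Matrix.IsHermitian.eq_mul_diagonal_mul {κ : Type*} [Fintype κ] [DecidableEq κ]
    {A : Matrix κ κ ℂ} (hA : A.IsHermitian) :
    A = (hA.eigenvectorUnitary : Matrix κ κ ℂ) * diagonal (fun i => (hA.eigenvalues i : ℂ)) *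
      (hA.eigenvectorUnitary : Matrix κ κ ℂ)ᴴ := by
  conv_lhs => rw [hA.spectral_theorem, Unitary.conjStarAlgAut_apply]
  rfl

lemma Matrix.IsHermitian.conjTranspose_eigenvectorUnitary_mul {κ : Type*} [Fintype κ]
    [DecidableEq κ] {A : Matrix κ κ ℂ} (hA : A.IsHermitian) :
    (hA.eigenvectorUnitary : Matrix κ κ ℂ)ᴴ * (hA.eigenvectorUnitary : Matrix κ κ ℂ) = 1 :=
  Unitary.coe_star_mul_self hA.eigenvectorUnitary

lemma trace_mul_re_le_sum_abs_eigenvalues {κ : Type*} [Fintype κ] [DecidableEq κ]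
    {P A : Matrix κ κ ℂ} (hP : P.PosSemidef) (hP' : (1 - P).PosSemidef) (hA : A.IsHermitian) :
    (P * A).trace.re ≤ ∑ i, |hA.eigenvalues i| := by
  obtain ⟨w, h0, h1, -, h⟩ :=
    exists_weights_of_effect hP hP' hA.conjTranspose_eigenvectorUnitary_mul
  have := h hA.eigenvalues
  rw [← hA.eq_mul_diagonal_mul] at this
  rw [this]
  refine Finset.sum_le_sum fun i _ => (le_abs_self _).trans ?_
  rw [abs_mul, abs_of_nonneg (h0 i)]
  exact mul_le_of_le_one_left (abs_nonneg _) (h1 i)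

/-- The support projection of a Hermitian matrix. -/
lemma Matrix.IsHermitian.exists_support_effect {κ : Type*} [Fintype κ] [DecidableEq κ]
    {A : Matrix κ κ ℂ} (hA : A.IsHermitian) :
    ∃ P : Matrix κ κ ℂ, P.PosSemidef ∧ (1 - P).PosSemidef ∧ P * A = A ∧ P.trace = A.rank := by
  set U := (hA.eigenvectorUnitary : Matrix κ κ ℂ) with hUdef
  have hU : Uᴴ * U = 1 := hA.conjTranspose_eigenvectorUnitary_mul
  have hU' : U * Uᴴ = 1 := mul_eq_one_comm.mp hU
  set e : κ → ℂ := fun i => if hA.eigenvalues i = 0 then 0 else 1 with he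
  refine ⟨U * diagonal e * Uᴴ, ?_, ?_, ?_, ?_⟩
  · refine PosSemidef.mul_mul_conjTranspose_same (PosSemidef.diagonal fun i => ?_) U
    simp only [he, Pi.zero_apply]
    split_ifs <;> simp
  · have : 1 - U * diagonal e * Uᴴ = U * diagonal (1 - e) * Uᴴ := by
      rw [← hU', show diagonal (1 - e) = 1 - diagonal e by
        rw [← diagonal_one, diagonal_sub]; rfl]
      simp [mul_sub, sub_mul]
    rw [this]
    refine PosSemidef.mul_mul_conjTranspose_same (PosSemidef.diagonal fun i => ?_) U
    simp only [he, Pi.zero_apply, Pi.sub_apply, Pi.one_apply]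
    split_ifs <;> simp
  · conv_lhs => rw [hA.eq_mul_diagonal_mul]
    conv_rhs => rw [hA.eq_mul_diagonal_mul]
    rw [← hUdef]
    calc U * diagonal e * Uᴴ * (U * diagonal (fun i => (hA.eigenvalues i : ℂ)) * Uᴴ)
        = U * (diagonal e * (Uᴴ * U) * diagonal (fun i => (hA.eigenvalues i : ℂ))) * Uᴴ := by
          simp only [mul_assoc]
      _ = _ := by
          rw [hU, mul_one, diagonal_mul_diagonal]
          congr 3
          ext i
          simp only [he]
          split_ifs with h <;> simp [h]
  · rw [trace_mul_comm, ← mul_assoc, hU, one_mul, trace_diagonal, hA.rank_eq_card_non_zero_eigs,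
      Fintype.card_subtype]
    simp [he, Finset.sum_ite]

lemma kronPow_mul {ι : Type*} [Fintype ι] (A B : Matrix ι ι ℂ) (n : ℕ) :
    kronPow (A * B) n = kronPow A n * kronPow B n := by
  ext i j
  simp only [kronPow, of_apply, mul_apply, ← Finset.prod_mul_distrib]
  rw [Finset.prod_univ_sum, Fintype.piFinset_univ]

lemma kronPow_diagonal {ι : Type*} [DecidableEq ι] (d : ι → ℂ) (n : ℕ) :
    kronPow (diagonal d) n = diagonal fun x => ∏ k, d (x k) := by
  ext i j
  simp only [kronPow, of_apply, diagonal_apply]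
  split_ifs with h
  · simp [h]
  · obtain ⟨k, hk⟩ := Function.ne_iff.mp h
    exact Finset.prod_eq_zero (Finset.mem_univ k) (if_neg hk)

lemma kronPow_conjTranspose {ι : Type*} (A : Matrix ι ι ℂ) (n : ℕ) :
    kronPow Aᴴ n = (kronPow A n)ᴴ := by
  ext i j
  simp [kronPow, conjTranspose_apply]

lemma kronPow_one {ι : Type*} [DecidableEq ι] (n : ℕ) :
    kronPow (1 : Matrix ι ι ℂ) n = 1 := by
  rw [← diagonal_one, kronPow_diagonal]
  simp

/-- An i.i.d. sum of `n` centred terms of unit variance, each finitely supported, exceeds `√n` with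
probability bounded below. -/
lemma exists_le_sum_prod_of_sqrt_lt {ι : Type*} [Fintype ι] (p f : ι → ℝ)
    (hp : ∀ i, 0 ≤ p i) (hp1 : ∑ i, p i = 1) (hf0 : ∑ i, p i * f i = 0)
    (hf1 : ∑ i, p i * f i ^ 2 = 1) :
    ∃ c : ℝ, 0 < c ∧ ∃ n₀ : ℕ, ∀ n, n₀ ≤ n →
      c ≤ ∑ x : Fin n → ι with √n < ∑ k, f (x k), ∏ k, p (x k) := by
  let _ : MeasurableSpace ι := ⊤
  have : DiscreteMeasurableSpace ι := ⟨fun _ => trivial⟩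
  let μ : Measure ι := ∑ i, ENNReal.ofReal (p i) • Measure.dirac i
  have hμi (i : ι) : μ {i} = ENNReal.ofReal (p i) := by
    simp only [μ, Measure.coe_finsetSum, Finset.sum_apply, Measure.smul_apply, smul_eq_mul,
      Measure.dirac_apply, Set.indicator_apply, Set.mem_singleton_iff, Pi.one_apply, mul_ite,
      mul_one, mul_zero]
    simp
  have : IsProbabilityMeasure μ := ⟨by
    simp [μ, Measure.coe_finsetSum, ← ENNReal.ofReal_sum_of_nonneg fun i _ => hp i, hp1]⟩
  have hint (g : ι → ℝ) : ∫ i, g i ∂μ = ∑ i, p i * g i := by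
    rw [integral_fintype .of_finite]
    simp [Measure.real, hμi, hp]
  let P : Measure (ℕ → ι) := Measure.infinitePi fun _ => μ
  let X : ℕ → (ℕ → ι) → ℝ := fun k ω => f (ω k)
  have hmp (k : ℕ) : MeasurePreserving (fun ω : ℕ → ι => ω k) P μ :=
    measurePreserving_eval_infinitePi (fun _ => μ) k
  have hfm : Measurable f := measurable_of_finite f
  have hintX (g : ι → ℝ) : ∫ ω, g (ω 0) ∂P = ∑ i, p i * g i := by
    rw [← hint, ← (hmp 0).map_eq, integral_map (hmp 0).measurable.aemeasurable]
    exact (measurable_of_finite g).aestronglyMeasurable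
  have hindep : iIndepFun X P := iIndepFun_infinitePi (X := fun _ => f) fun _ => hfm
  have hident (k : ℕ) : IdentDistrib (X k) (X 0) P P := by
    have : IdentDistrib (fun ω : ℕ → ι => ω k) (fun ω => ω 0) P P :=
      ⟨(hmp k).measurable.aemeasurable, (hmp 0).measurable.aemeasurable,
        (hmp k).map_eq.trans (hmp 0).map_eq.symm⟩
    exact this.comp hfm
  have hclt := tendstoInDistribution_inv_sqrt_mul_sum (P := P) (X := X)
    (P' := gaussianReal 0 1) (Y := id) .id ((hintX f).trans hf0)
    ((hintX fun i => f i ^ 2).trans hf1) hindep hident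
  have hlim := ProbabilityMeasure.le_liminf_measure_open_of_tendsto hclt.tendsto
    (isOpen_Ioi (a := (1 : ℝ)))
  have hpos : 0 < gaussianReal 0 1 (Set.Ioi 1) := by
    refine pos_iff_ne_zero.mpr fun h => ?_
    have := gaussianReal_absolutelyContinuous' 0 one_ne_zero h
    simp at this
  simp only [ProbabilityMeasure.coe_mk, Measure.map_id] at hlim
  obtain ⟨c, hc0, hc⟩ := ENNReal.lt_iff_exists_nnreal_btwn.mp (hpos.trans_le hlim)
  refine ⟨c, by exact_mod_cast hc0, ?_⟩
  obtain ⟨n₀, hn₀⟩ := eventually_atTop.mp (eventually_lt_of_lt_liminf hc)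
  refine ⟨n₀ + 1, fun n hn => ?_⟩
  have hcn := hn₀ n (by omega)
  have hnpos : 0 < √(n : ℝ) := Real.sqrt_pos.mpr (by exact_mod_cast (by omega : 0 < n))
  rw [Measure.map_apply_of_aemeasurable (hclt.forall_aemeasurable n) measurableSet_Ioi] at hcn
  let S : Finset (Fin n → ι) := {x | √n < ∑ k, f (x k)}
  let t (x : Fin n → ι) (k : ℕ) : Set ι := if h : k < n then {x ⟨k, h⟩} else Set.univ
  have hsub : (fun ω => (√n)⁻¹ * ∑ k ∈ Finset.range n, X k ω) ⁻¹' Set.Ioi 1 ⊆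
      ⋃ x ∈ S, Set.pi (Finset.range n : Set ℕ) (t x) := by
    intro ω hω
    rw [Set.mem_preimage, Set.mem_Ioi, inv_mul_eq_div, one_lt_div hnpos, Finset.sum_range] at hω
    refine Set.mem_biUnion (x := fun k : Fin n => ω k) (by simpa [S] using hω) fun k hk => ?_
    have hk : k < n := by simpa using hk
    simp [t, hk]
  have hcyl (x : Fin n → ι) : P (Set.pi (Finset.range n : Set ℕ) (t x)) =
      ENNReal.ofReal (∏ k, p (x k)) := by
    rw [Measure.infinitePi_pi _ fun _ _ => .of_discrete, Finset.prod_range,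
      ENNReal.ofReal_prod_of_nonneg fun k _ => hp _]
    simp [t, hμi]
  have hle := hcn.le.trans ((measure_mono hsub).trans (measure_biUnion_finset_le _ _))
  simp only [hcyl] at hle
  rw [← ENNReal.ofReal_sum_of_nonneg fun x _ => Finset.prod_nonneg fun k _ => hp _] at hle
  rw [← ENNReal.ofReal_coe_nnreal, ENNReal.ofReal_le_ofReal_iff
    (Finset.sum_nonneg fun x _ => Finset.prod_nonneg fun k _ => hp _)] at hle
  exact hle

/-- A density matrix supported on an `r`-dimensional subspace and close to a state `τ` forces `r`
to be at least `K` times the mass of the eigenvalues of `τ` not exceeding `K⁻¹`, up to the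
distance. -/
lemma le_rank_of_traceDist_le {κ : Type*} [Fintype κ] [DecidableEq κ] {σ τ U : Matrix κ κ ℂ}
    (hσ : IsDensity σ) (hU : Uᴴ * U = 1) {q : κ → ℝ} (hq : ∀ x, 0 ≤ q x) (hq1 : ∑ x, q x = 1)
    (hτ : τ = U * diagonal (fun x => (q x : ℂ)) * Uᴴ) (S : Finset κ) {K : ℝ} (hK : 0 < K)
    (hS : ∀ x ∈ S, q x ≤ K⁻¹) :
    (∑ x ∈ S, q x - traceDist σ τ) * K ≤ σ.rank := by
  have hσH : σ.IsHermitian := hσ.1.isHermitian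
  have hτH : τ.IsHermitian := by
    rw [hτ]
    refine isHermitian_mul_mul_conjTranspose U (isHermitian_diagonal_of_self_adjoint _ ?_)
    ext x
    simp
  obtain ⟨P, hP, hP', hPσ, hPtr⟩ := hσH.exists_support_effect
  obtain ⟨w, hw0, hw1, hw, hwd⟩ := exists_weights_of_effect hP hP' hU
  have hdist : (P * (σ - τ)).trace.re ≤ traceDist σ τ := by
    rw [traceDist, dif_pos (hσH.sub hτH)]
    exact trace_mul_re_le_sum_abs_eigenvalues hP hP' (hσH.sub hτH)
  have hPτ : (P * τ).trace.re = ∑ x, w x * q x := by rw [hτ, hwd]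
  rw [mul_sub, hPσ, trace_sub, hσ.2, Complex.sub_re, hPτ, Complex.one_re] at hdist
  have hmiss : ∑ x ∈ S, (1 - w x) * q x ≤ ∑ x, (1 - w x) * q x :=
    Finset.sum_le_univ_sum_of_nonneg fun x => mul_nonneg (sub_nonneg.mpr (hw1 x)) (hq x)
  simp only [sub_mul, one_mul, Finset.sum_sub_distrib, hq1] at hmiss
  have hhit : ∑ x ∈ S, w x * q x ≤ σ.rank * K⁻¹ := by
    calc ∑ x ∈ S, w x * q x ≤ ∑ x ∈ S, w x * K⁻¹ :=
          Finset.sum_le_sum fun x hx => mul_le_mul_of_nonneg_left (hS x hx) (hw0 x)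
      _ ≤ ∑ x, w x * K⁻¹ :=
          Finset.sum_le_univ_sum_of_nonneg fun x => mul_nonneg (hw0 x) (inv_nonneg.mpr hK.le)
      _ = σ.rank * K⁻¹ := by rw [← Finset.sum_mul, hw, hPtr]; simp
  rw [← le_div_iff₀ hK, div_eq_mul_inv]
  linarith

/-- any density matrix `σ` within trace distance `2(1−δ)` of `ρ^{⊗n}` has rank
greater than `C · 2^{nE + α√n}`, for suitable constants `δ < 1`, `C > 0`, `n₀` and all `n ≥ n₀`. -/
theorem rank_lower_bound_of_close_to_kronPow {ι : Type*} [Fintype ι] [DecidableEq ι] [Nonempty ι]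
    (ρ : Matrix ι ι ℂ) (hρ : IsDensity ρ)
    (E α β : ℝ)
    (hE : E = -∑ i, hρ.1.isHermitian.eigenvalues i *
        Real.logb 2 (hρ.1.isHermitian.eigenvalues i))
    (hα : α = Real.sqrt (∑ i, hρ.1.isHermitian.eigenvalues i *
        (Real.logb 2 (hρ.1.isHermitian.eigenvalues i) + E) ^ 2))
    (hβ : β = ∑ i, hρ.1.isHermitian.eigenvalues i *
        |Real.logb 2 (hρ.1.isHermitian.eigenvalues i) + E| ^ 3)
    (hαpos : 0 < α) :
    ∃ δ C : ℝ, ∃ n₀ : ℕ, δ < 1 ∧ 0 < C ∧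
      ∀ n : ℕ, n₀ ≤ n →
        ∀ σ : Matrix (Fin n → ι) (Fin n → ι) ℂ, IsDensity σ →
          traceDist σ (kronPow ρ n) ≤ 2 * (1 - δ) →
          C * (2 : ℝ) ^ ((n : ℝ) * E + α * Real.sqrt n) < (σ.rank : ℝ) := by
  set p := hρ.1.isHermitian.eigenvalues with hpdef
  have hp : ∀ i, 0 ≤ p i := hρ.1.eigenvalues_nonneg
  have hp1 : ∑ i, p i = 1 := by
    have h : ((∑ i, p i : ℝ) : ℂ) = 1 := by
      rw [Complex.ofReal_sum]
      exact hρ.1.isHermitian.trace_eq_sum_eigenvalues.symm.trans hρ.2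
    exact_mod_cast h
  have hα2 : ∑ i, p i * (Real.logb 2 (p i) + E) ^ 2 = α ^ 2 := by
    rw [hα, Real.sq_sqrt (Finset.sum_nonneg fun i _ => mul_nonneg (hp i) (sq_nonneg _))]
  let f : ι → ℝ := fun i => -(Real.logb 2 (p i) + E) / α
  have hf0 : ∑ i, p i * f i = 0 := by
    have : ∑ i, p i * f i = -(∑ i, p i * Real.logb 2 (p i) + (∑ i, p i) * E) / α := by
      rw [Finset.sum_mul, ← Finset.sum_add_distrib, ← Finset.sum_neg_distrib, Finset.sum_div]
      exact Finset.sum_congr rfl fun i _ => by simp only [f]; ring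
    rw [this, hp1, hE]
    simp
  have hf1 : ∑ i, p i * f i ^ 2 = 1 := by
    have : ∑ i, p i * f i ^ 2 = (∑ i, p i * (Real.logb 2 (p i) + E) ^ 2) / α ^ 2 := by
      rw [Finset.sum_div]
      exact Finset.sum_congr rfl fun i _ => by simp only [f]; ring
    rw [this, hα2, div_self (by positivity)]
  obtain ⟨c, hc, n₀, hn₀⟩ := exists_le_sum_prod_of_sqrt_lt p f hp hp1 hf0 hf1
  refine ⟨1 - c / 4, c / 4, n₀, by linarith, by linarith, fun n hn σ hσ hdist => ?_⟩
  set K : ℝ := (2 : ℝ) ^ ((n : ℝ) * E + α * √n) with hKdef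
  have hK : 0 < K := Real.rpow_pos_of_pos two_pos _
  set V : Matrix ι ι ℂ := (hρ.1.isHermitian.eigenvectorUnitary : Matrix ι ι ℂ)
  have hU : (kronPow V n)ᴴ * kronPow V n = 1 := by
    rw [← kronPow_conjTranspose, ← kronPow_mul,
      hρ.1.isHermitian.conjTranspose_eigenvectorUnitary_mul, kronPow_one]
  have hτ : kronPow ρ n = kronPow V n * diagonal (fun x => ((∏ k, p (x k) : ℝ) : ℂ)) *
      (kronPow V n)ᴴ := by
    conv_lhs => rw [hρ.1.isHermitian.eq_mul_diagonal_mul]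
    rw [kronPow_mul, kronPow_mul, kronPow_diagonal, kronPow_conjTranspose]
    simp [hpdef, V]
  have hq1 : ∑ x : Fin n → ι, ∏ k, p (x k) = 1 := by
    rw [← Fintype.piFinset_univ, ← Finset.prod_univ_sum]
    simp [hp1]
  have hS : ∀ x ∈ ({x | √n < ∑ k, f (x k)} : Finset (Fin n → ι)), ∏ k, p (x k) ≤ K⁻¹ := by
    intro x hx
    rw [Finset.mem_filter_univ] at hx
    by_cases hz : ∏ k, p (x k) = 0
    · rw [hz]
      positivity
    have hpos (k : Fin n) : 0 < p (x k) :=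
      (hp _).lt_of_ne' (Finset.prod_ne_zero_iff.mp hz k (Finset.mem_univ k))
    have hlog : ∑ k, Real.logb 2 (p (x k)) = -(n * E + α * ∑ k, f (x k)) := by
      have (k : Fin n) : Real.logb 2 (p (x k)) = -(E + α * f (x k)) := by
        simp only [f]
        field_simp
        ring
      simp [this, Finset.sum_add_distrib, Finset.mul_sum]
    have hprod : ∏ k, p (x k) = (2 : ℝ) ^ ∑ k, Real.logb 2 (p (x k)) := by
      rw [Real.rpow_sum_of_pos two_pos]
      exact Finset.prod_congr rfl fun k _ =>
        (Real.rpow_logb two_pos (by norm_num) (hpos k)).symm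
    rw [hprod, hlog, hKdef, ← Real.rpow_neg two_pos.le]
    refine Real.rpow_le_rpow_of_exponent_le one_le_two ?_
    have := mul_le_mul_of_nonneg_left hx.le hαpos.le
    linarith
  have hrank := le_rank_of_traceDist_le hσ hU (fun x => Finset.prod_nonneg fun k _ => hp _) hq1 hτ
    _ hK hS
  refine lt_of_lt_of_le (mul_lt_mul_of_pos_right ?_ hK) hrank
  have := hn₀ n hn
  linarith
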